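/- arXiv:cs/0411032 — 4 statements merged into one kernel-verified Lean document; each statement's English description precedes it below -/
import Mathlib

section
/- Let F=(S,𝒦) be an adversarial frame, let i be an agent, and let f be an information function for agent i. Assume the set Φ₀ of primitive propositions is nonempty. Then agent i maintains f-secrecy in F if and only if, for every interpretation π, every formula φ of epistemic logic that is f-local and nontrivial in the epistemic structure M=(S,𝒦,π) satisfies M ⊨ ¬Kφ. -/
/-- Formulas of epistemic logic over a set `P` of primitive propositions. -/
inductive Formula (P : Type) : Type
  | prim : P → Formula P
  | neg : Formula P → Formula P
  | conj : Formula P → Formula P → Formula P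
  | know : Formula P → Formula P

/-- Satisfaction in an epistemic structure `(W, K, π)`. -/
def Sat {P W : Type} (K : W → W → Prop) (π : W → Set P) : W → Formula P → Prop
  | w, .prim p => p ∈ π w
  | w, .neg φ => ¬ Sat K π w φ
  | w, .conj φ ψ => Sat K π w φ ∧ Sat K π w ψ
  | w, .know φ => ∀ w', K w w' → Sat K π w' φ

/-- `f`-secrecy in the frame `(S, K)`: at every state the knower considers every value in the image
of `f` possible. -/
def MaintainsSecrecy {S V : Type*} (K : S → S → Prop) (f : S → V) : Prop :=
  ∀ s v, (∃ t, f t = v) → ∃ s', K s s' ∧ f s' = v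

/-- `f`-locality of `φ` in `(S, K, π)`: the truth value of `φ` at a state depends only on the value
of `f` there. -/
def Formula.IsLocal {P S : Type} {V : Type*} (K : S → S → Prop) (π : S → Set P) (f : S → V)
    (φ : Formula P) : Prop :=
  ∀ s s', f s = f s' → (Sat K π s φ ↔ Sat K π s' φ)

/-- Nontriviality of `φ` in `(S, K, π)`: `φ` is true at some state and false at another. -/
def Formula.IsNontrivial {P S : Type} (K : S → S → Prop) (π : S → Set P) (φ : Formula P) : Prop :=
  ∃ s s', Sat K π s φ ∧ Sat K π s' (.neg φ)

/-- The interpretation under which every primitive proposition is true exactly on `A`, so that any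
one of them expresses membership in `A`. -/
def membershipInterpretation (P : Type) {S : Type} (A : Set S) : S → Set P :=
  fun s => {_p | s ∈ A}

section

variable {P S : Type} {V : Type*} {K : S → S → Prop} {f : S → V}

theorem MaintainsSecrecy.sat_neg_know (secrecy : MaintainsSecrecy K f) {π : S → Set P}
    {φ : Formula P} (φ_local : φ.IsLocal K π f) {t : S} (φ_false : Sat K π t (.neg φ)) (s : S) :
    Sat K π s (.neg (.know φ)) := by
  intro φ_known
  obtain ⟨s', s_s', fs'_eq⟩ := secrecy s (f t) ⟨t, rfl⟩
  exact φ_false ((φ_local s' t fs'_eq).1 (φ_known s' s_s'))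

theorem sat_prim_membershipInterpretation {A : Set S} {s : S} {p : P} :
    Sat K (membershipInterpretation P A) s (.prim p) ↔ s ∈ A :=
  Iff.rfl

theorem isLocal_prim_membershipInterpretation_preimage (K : S → S → Prop) (f : S → V) (U : Set V)
    (p : P) : (Formula.prim p).IsLocal K (membershipInterpretation P (f ⁻¹' U)) f := by
  intro s s' fs_eq
  rw [sat_prim_membershipInterpretation, sat_prim_membershipInterpretation, Set.mem_preimage,
    Set.mem_preimage, fs_eq]

theorem not_maintainsSecrecy_iff :
    ¬ MaintainsSecrecy K f ↔ ∃ s t, ∀ s', K s s' → f s' ≠ f t := by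
  simp [MaintainsSecrecy]

-- If `s` rules out the value `f t`, then at `s` the fact "the value is not `f t`" is known. It is
-- false at `t` and, `K` being serial, true at some successor of `s`.
theorem exists_isLocal_isNontrivial_sat_know [Nonempty P] (serial : Relator.LeftTotal K)
    (no_secrecy : ¬ MaintainsSecrecy K f) :
    ∃ (π : S → Set P) (φ : Formula P),
      (φ.IsLocal K π f ∧ φ.IsNontrivial K π) ∧ ∃ s, Sat K π s (.know φ) := by
  obtain ⟨s, t, excluded⟩ := not_maintainsSecrecy_iff.1 no_secrecy
  obtain ⟨p⟩ := ‹Nonempty P›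
  obtain ⟨u, s_u⟩ := serial s
  refine ⟨membershipInterpretation P (f ⁻¹' {f t}ᶜ), .prim p, ⟨?_, u, t, ?_, ?_⟩, s, ?_⟩
  · exact isLocal_prim_membershipInterpretation_preimage K f {f t}ᶜ p
  · exact sat_prim_membershipInterpretation.2 (excluded u s_u)
  · exact fun ne => sat_prim_membershipInterpretation.1 ne rfl
  · exact fun s' s_s' => sat_prim_membershipInterpretation.2 (excluded s' s_s')

theorem f_secrecy_iff_no_knowledge_general [Nonempty P] (serial : Relator.LeftTotal K)
    (f : S → V) :
    MaintainsSecrecy K f ↔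
      ∀ (π : S → Set P) (φ : Formula P), φ.IsLocal K π f ∧ φ.IsNontrivial K π →
        ∀ s, Sat K π s (.neg (.know φ)) := by
  constructor
  · rintro secrecy π φ ⟨φ_local, _, _, _, φ_false⟩
    exact secrecy.sat_neg_know φ_local φ_false
  · intro no_knowledge
    by_contra no_secrecy
    obtain ⟨π, φ, hφ, s, φ_known⟩ :=
      exists_isLocal_isNontrivial_sat_know (P := P) serial no_secrecy
    exact no_knowledge π φ hφ s φ_known

end

/-- Theorem (Halpern–O'Neill): in an adversarial frame `(S, K)` (where `adv`
gives the adversary's local state, so `K` contains the local-state-identity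
relation), with `f` an information function for agent `i` (whose local state is
given by `loc`), and assuming `P` (the set Φ₀ of primitive propositions) is
nonempty: agent `i` maintains `f`-secrecy iff for every interpretation `π`,
every formula `φ` that is `f`-local and nontrivial in `M = (S, K, π)` satisfies
`M ⊨ ¬Kφ`. -/
theorem f_secrecy_iff_no_knowledge
    {P : Type} [Nonempty P] {S Ladv Li V : Type}
    (adv : S → Ladv) (loc : S → Li)
    (K : S → S → Prop)
    (hK : ∀ s s' : S, adv s = adv s' → K s s')
    (f : S → V)
    (hf : ∀ s s' : S, loc s = loc s' → f s = f s') :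
    (∀ s : S, ∀ v : V, (∃ t : S, f t = v) → ∃ s' : S, K s s' ∧ f s' = v) ↔
    (∀ π : S → Set P, ∀ φ : Formula P,
      ((∀ s s' : S, f s = f s' → (Sat K π s φ ↔ Sat K π s' φ)) ∧
        (∃ s s' : S, Sat K π s φ ∧ Sat K π s' (.neg φ))) →
      ∀ s : S, Sat K π s (.neg (.know φ))) :=
  f_secrecy_iff_no_knowledge_general (fun s => ⟨s, hK s s rfl⟩) f
end

section
/- Let P be a message-transmission protocol with set of global states S_P, exchanged-message function msg : S_P → 𝓜, and adversary local states consisting of sets of symbolic messages, and assume that for every m∈𝓜 there is at least one state s∈S_P with msg(s)=m. Assume the set Φ₀ of primitive propositions is nonempty. Then P preserves message secrecy (i.e., for all s∈S_P and all m∈𝓜, 𝒦ᵈʸ(s)∩G(m)≠∅) if and only if, for every interpretation π, every formula φ of epistemic logic that depends only on the message exchanged and is nontrivial in M=(S_P,𝒦ᵈʸ,π) satisfies M ⊨ ¬Kφ. -/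
/-- Symbolic messages over plaintexts `Pl` and keys `Key`. -/
inductive Msg (Pl Key : Type) : Type
  | plain : Pl → Msg Pl Key
  | key : Key → Msg Pl Key
  | pair : Msg Pl Key → Msg Pl Key → Msg Pl Key
  | enc : Msg Pl Key → Key → Msg Pl Key

/-- Dolev–Yao derivability `H ⊢ m`, given the inverse-key map `inv`. -/
inductive DY {Pl Key : Type} (inv : Key → Key) (H : Set (Msg Pl Key)) :
    Msg Pl Key → Prop
  | mem {m : Msg Pl Key} : m ∈ H → DY inv H m
  | dec {m : Msg Pl Key} {k : Key} :
      DY inv H (.enc m k) → DY inv H (.key (inv k)) → DY inv H m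
  | fst {m₁ m₂ : Msg Pl Key} : DY inv H (.pair m₁ m₂) → DY inv H m₁
  | snd {m₁ m₂ : Msg Pl Key} : DY inv H (.pair m₁ m₂) → DY inv H m₂

/-- Extended messages: messages possibly containing the symbol `▢`. -/
inductive EMsg (Pl Key : Type) : Type
  | plain : Pl → EMsg Pl Key
  | key : Key → EMsg Pl Key
  | pair : EMsg Pl Key → EMsg Pl Key → EMsg Pl Key
  | enc : EMsg Pl Key → Key → EMsg Pl Key
  | box : EMsg Pl Key

open Classical in
/-- `⌊m⌋_K`: replace every indecipherable submessage of `m` by `▢`. -/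
noncomputable def floorK {Pl Key : Type} (inv : Key → Key) (K : Set Key) :
    Msg Pl Key → EMsg Pl Key
  | .plain p => .plain p
  | .key k => .key k
  | .pair m₁ m₂ => .pair (floorK inv K m₁) (floorK inv K m₂)
  | .enc m k => if inv k ∈ K then .enc (floorK inv K m) k else .box

/-- `Keys(H) = {k : H ⊢ k}`. -/
def KeysOf {Pl Key : Type} (inv : Key → Key) (H : Set (Msg Pl Key)) : Set Key :=
  {k | DY inv H (.key k)}

namespace Formula

variable {P W : Type} {X : Type*}

/-- `φ` depends only on the observable `f` in the structure `(W, K, π)`: its truth value is constant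
on the fibres of `f`. With `f` the exchanged message, this is the paper's "depends only on the
message exchanged". -/
def DependsOnlyOn (φ : Formula P) (K : W → W → Prop) (π : W → Set P) (f : W → X) : Prop :=
  ∀ v w : W, f v = f w → (Sat K π v φ ↔ Sat K π w φ)

/-- `φ` is nontrivial in the structure `(W, K, π)`: it holds at some world and fails at some
world. -/
def IsNontrivial_s1 (φ : Formula P) (K : W → W → Prop) (π : W → Set P) : Prop :=
  ∃ v w : W, Sat K π v φ ∧ Sat K π w (.neg φ)

end Formula

section Secrecy

variable {P W : Type} {X : Type*} {K : W → W → Prop} {f : W → X}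

/-- `K` preserves the secrecy of the observable `f`: at every world, each value that `f` takes
anywhere is considered possible. For `K` the Dolev–Yao relation and `f` the exchanged message, this
is message secrecy. -/
def PreservesSecrecy (K : W → W → Prop) (f : W → X) : Prop :=
  ∀ w : W, ∀ x ∈ Set.range f, ∃ w' : W, K w w' ∧ f w' = x

theorem PreservesSecrecy.sat_neg_know (hsecret : PreservesSecrecy K f) {π : W → Set P}
    {φ : Formula P} (hdep : φ.DependsOnlyOn K π f) {v : W} (hv : Sat K π v (.neg φ)) (w : W) :
    Sat K π w (.neg (.know φ)) := by
  intro hknow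
  obtain ⟨u, hwu, hfu⟩ := hsecret w (f v) (Set.mem_range_self v)
  exact hv ((hdep u v hfu).1 (hknow u hwu))

/-- The interpretation under which every primitive proposition says that `f` does not take the
value `x`. Knowing such a proposition is having ruled out `x`, so it detects any failure of
secrecy. -/
def avoidingInterp (P : Type) (f : W → X) (x : X) : W → Set P :=
  fun w ↦ {_p | f w ≠ x}

theorem sat_prim_avoidingInterp {p : P} {x : X} {w : W} :
    Sat K (avoidingInterp P f x) w (.prim p) ↔ f w ≠ x :=
  Iff.rfl

theorem sat_know_prim_avoidingInterp {p : P} {x : X} {w : W} :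
    Sat K (avoidingInterp P f x) w (.know (.prim p)) ↔ ∀ w', K w w' → f w' ≠ x :=
  Iff.rfl

theorem dependsOnlyOn_prim_avoidingInterp (K : W → W → Prop) (f : W → X) (p : P) (x : X) :
    (Formula.prim p).DependsOnlyOn K (avoidingInterp P f x) f := by
  intro v w hf
  rw [sat_prim_avoidingInterp, sat_prim_avoidingInterp, hf]

theorem isNontrivial_prim_avoidingInterp (K : W → W → Prop) (p : P) {x : X}
    (hx : x ∈ Set.range f) {w : W} (hw : f w ≠ x) :
    (Formula.prim p).IsNontrivial_s1 K (avoidingInterp P f x) := by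
  obtain ⟨v, hv⟩ := hx
  exact ⟨w, v, sat_prim_avoidingInterp.2 hw, fun hsat ↦ sat_prim_avoidingInterp.1 hsat hv⟩

theorem preservesSecrecy_of_sat_neg_know [Nonempty P] (hK : Relator.LeftTotal K)
    (hignorant : ∀ (π : W → Set P) (φ : Formula P),
      φ.DependsOnlyOn K π f ∧ φ.IsNontrivial_s1 K π → ∀ w : W, Sat K π w (.neg (.know φ))) :
    PreservesSecrecy K f := by
  intro w x hx
  by_contra! hruledOut
  obtain ⟨p⟩ := ‹Nonempty P›
  obtain ⟨w', hw'⟩ := hK w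
  have hnontrivial : (Formula.prim p).IsNontrivial_s1 K (avoidingInterp P f x) :=
    isNontrivial_prim_avoidingInterp K p hx (hruledOut w' hw')
  exact hignorant _ _ ⟨dependsOnlyOn_prim_avoidingInterp K f p x, hnontrivial⟩ w
    (sat_know_prim_avoidingInterp.2 hruledOut)

theorem message_secrecy_iff_no_knowledge_general [Nonempty P] (hK : Relator.LeftTotal K)
    (f : W → X) :
    PreservesSecrecy K f ↔
      ∀ (π : W → Set P) (φ : Formula P),
        φ.DependsOnlyOn K π f ∧ φ.IsNontrivial_s1 K π → ∀ w : W, Sat K π w (.neg (.know φ)) := by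
  refine ⟨?_, preservesSecrecy_of_sat_neg_know hK⟩
  rintro hsecret π φ ⟨hdep, -, v, -, hv⟩ w
  exact hsecret.sat_neg_know hdep hv w

end Secrecy

/-- Theorem: a message-transmission protocol `P` (states `S`, adversary local
states `sadv` being sets of messages, exchanged message `msg s ∈ 𝓜`, with
every `m ∈ 𝓜` exchanged in some state) preserves message secrecy iff, for every
interpretation `π`, every formula `φ` that depends only on the message
exchanged and is nontrivial in `M = (S, 𝒦ᵈʸ, π)` satisfies `M ⊨ ¬Kφ`.
Here `𝒦ᵈʸ` relates `s, s'` iff `⌊s_adv⌋_{Keys(s_adv)} = ⌊s'_adv⌋_{Keys(s'_adv)}`,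
and `P` (the set Φ₀ of primitive propositions) is nonempty. -/
theorem message_secrecy_iff_no_knowledge
    {P : Type} [Nonempty P] {Pl Key S : Type}
    (inv : Key → Key) (hinv : Function.Involutive inv)
    (sadv : S → Set (Msg Pl Key))
    (𝓜 : Set (Msg Pl Key)) (msg : S → Msg Pl Key)
    (hmsg : ∀ s : S, msg s ∈ 𝓜)
    (hsurj : ∀ m ∈ 𝓜, ∃ s : S, msg s = m)
    (Kdy : S → S → Prop)
    (hKdy : ∀ s s' : S, Kdy s s' ↔
      floorK inv (KeysOf inv (sadv s)) '' sadv s =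
        floorK inv (KeysOf inv (sadv s')) '' sadv s') :
    (∀ s : S, ∀ m ∈ 𝓜, ∃ s' : S, Kdy s s' ∧ msg s' = m) ↔
    (∀ π : S → Set P, ∀ φ : Formula P,
      ((∀ s s' : S, msg s = msg s' → (Sat Kdy π s φ ↔ Sat Kdy π s' φ)) ∧
        (∃ s s' : S, Sat Kdy π s φ ∧ Sat Kdy π s' (.neg φ))) →
      ∀ s : S, Sat Kdy π s (.neg (.know φ))) := by
  obtain rfl : 𝓜 = Set.range msg :=
    Set.Subset.antisymm hsurj (Set.range_subset_iff.2 hmsg)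
  exact message_secrecy_iff_no_knowledge_general (fun s ↦ ⟨s, (hKdy s s).2 rfl⟩) msg
end

section
/- Let S be a set of global states in which the adversary's local state is a pair (x,z) with x a message component and z an auxiliary component, and assume S is rich in the sense that for every message component x occurring in some state of S and every auxiliary component z occurring in some state of S, there is a state in S whose adversary local state is (x,z). Let 𝒦 be a binary relation on S such that (s,s')∈𝒦 whenever the auxiliary components of s_adv and s'_adv are equal. Then for every interpretation π, every formula φ of epistemic logic such that (i) the truth value of φ at a state depends only on the message component of the adversary's local state (if two states have equal message components, φ has the same truth value at both) and (ii) φ is nontrivial in M=(S,𝒦,π), we have M ⊨ ¬Kφ. (This is the epistemic content of the theorem that a semantically secure encryption scheme yields M ⊨ ¬Kφ in the adversarial structure (S_C,𝒦ᶜʳʸᵖᵗ,π) for every nontrivial formula φ depending only on messages, since semantic security makes 𝒦ᶜʳʸᵖᵗ relate any two states with the same auxiliary information.) -/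
theorem sat_neg_know_iff {P W : Type} {K : W → W → Prop} {π : W → Set P} {w : W}
    {φ : Formula P} :
    Sat K π w (.neg (.know φ)) ↔ ∃ w', K w w' ∧ ¬ Sat K π w' φ := by
  simp only [Sat, not_forall, exists_prop]

theorem exists_rel_and_fst_eq {S X Z : Type*} {adv : S → X × Z} {K : S → S → Prop}
    (hrich : ∀ s t : S, ∃ u : S, adv u = ((adv s).1, (adv t).2))
    (hK : ∀ s s' : S, (adv s).2 = (adv s').2 → K s s') (s t : S) :
    ∃ u, K s u ∧ (adv u).1 = (adv t).1 := by
  obtain ⟨u, hu⟩ := hrich t s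
  have hfst : (adv u).1 = (adv t).1 := by rw [hu]
  have hsnd : (adv u).2 = (adv s).2 := by rw [hu]
  exact ⟨u, hK s u hsnd.symm, hfst⟩

/-- Theorem (epistemic content of semantic security): let `S` be a set of
global states whose adversary local state is a pair `(x, z)` of a message
component and an auxiliary component (given by `adv`), which is rich (for
every message component `x` occurring in some state and auxiliary component
`z` occurring in some state, some state has adversary local state `(x, z)`),
and let `K` relate any two states whose auxiliary components agree. Then for
every interpretation `π`, every formula `φ` whose truth depends only on the
message component and which is nontrivial in `M = (S, K, π)` satisfies
`M ⊨ ¬Kφ`. -/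
theorem semantic_security_no_knowledge
    {P S X Z : Type}
    (adv : S → X × Z)
    (hrich : ∀ s t : S, ∃ u : S, adv u = ((adv s).1, (adv t).2))
    (K : S → S → Prop)
    (hK : ∀ s s' : S, (adv s).2 = (adv s').2 → K s s') :
    ∀ π : S → Set P, ∀ φ : Formula P,
      (∀ s s' : S, (adv s).1 = (adv s').1 → (Sat K π s φ ↔ Sat K π s' φ)) →
      (∃ s s' : S, Sat K π s φ ∧ Sat K π s' (.neg φ)) →
      ∀ s : S, Sat K π s (.neg (.know φ)) := by
  rintro π φ hmsg ⟨_, t, _, ht⟩ s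
  obtain ⟨u, hsu, hut⟩ := exists_rel_and_fst_eq hrich hK s t
  have hu : ¬ Sat K π u φ := mt (hmsg u t hut).1 ht
  exact sat_neg_know_iff.2 ⟨u, hsu, hu⟩
end

section
/- Let K be a set of keys and m a symbolic message. Every submessage m' of ⌊m⌋_K that contains no occurrence of the symbol ▢ (and is hence an ordinary message) satisfies K∪{m} ⊢ m'. (This is the sound direction of the paper's claim that m' is a submessage of ⌊m⌋_K if and only if K∪{m} ⊢ m'.) -/
/-- The canonical embedding of ordinary messages into extended messages. -/
def Msg.toE {Pl Key : Type} : Msg Pl Key → EMsg Pl Key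
  | .plain p => .plain p
  | .key k => .key k
  | .pair m₁ m₂ => .pair m₁.toE m₂.toE
  | .enc m k => .enc m.toE k

/-- The submessage relation on extended messages. -/
inductive IsSubmsg {Pl Key : Type} : EMsg Pl Key → EMsg Pl Key → Prop
  | refl (m : EMsg Pl Key) : IsSubmsg m m
  | pairL {m' m₁ : EMsg Pl Key} (m₂ : EMsg Pl Key) : IsSubmsg m' m₁ → IsSubmsg m' (.pair m₁ m₂)
  | pairR (m₁ : EMsg Pl Key) {m' m₂ : EMsg Pl Key} : IsSubmsg m' m₂ → IsSubmsg m' (.pair m₁ m₂)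
  | enc {m' m : EMsg Pl Key} (k : Key) : IsSubmsg m' m → IsSubmsg m' (.enc m k)

/-!
A ▢-free extended message equal to `⌊m⌋_K` can only come from `m` itself, so descending through
`⌊m⌋_K` retraces a derivation from `m`: each pair is projected, and each encryption that was not
replaced by `▢` is opened with a key of `K`.
-/

namespace IsSubmsg

variable {Pl Key : Type} {e e₁ e₂ : EMsg Pl Key} {k : Key}

theorem plain_iff {p : Pl} : IsSubmsg e (.plain p) ↔ e = .plain p :=
  ⟨fun h => by cases h; rfl, fun h => h ▸ .refl _⟩

theorem key_iff : IsSubmsg e (.key k) ↔ e = .key k :=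
  ⟨fun h => by cases h; rfl, fun h => h ▸ .refl _⟩

theorem box_iff : IsSubmsg e .box ↔ e = .box :=
  ⟨fun h => by cases h; rfl, fun h => h ▸ .refl _⟩

theorem pair_iff :
    IsSubmsg e (.pair e₁ e₂) ↔ e = .pair e₁ e₂ ∨ IsSubmsg e e₁ ∨ IsSubmsg e e₂ := by
  constructor
  · intro h
    cases h with
    | refl => exact .inl rfl
    | pairL _ h₁ => exact .inr (.inl h₁)
    | pairR _ h₂ => exact .inr (.inr h₂)
  · rintro (rfl | h₁ | h₂)
    exacts [.refl _, .pairL _ h₁, .pairR _ h₂]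

theorem enc_iff : IsSubmsg e (.enc e₁ k) ↔ e = .enc e₁ k ∨ IsSubmsg e e₁ := by
  constructor
  · intro h
    cases h with
    | refl => exact .inl rfl
    | enc _ h₁ => exact .inr h₁
  · rintro (rfl | h₁)
    exacts [.refl _, .enc _ h₁]

end IsSubmsg

section Floor

variable {Pl Key : Type} {inv : Key → Key} {K : Set Key} {k : Key}

theorem floorK_enc_of_mem (hk : inv k ∈ K) (m : Msg Pl Key) :
    floorK inv K (.enc m k) = .enc (floorK inv K m) k :=
  if_pos hk

theorem floorK_enc_of_notMem (hk : inv k ∉ K) (m : Msg Pl Key) :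
    floorK inv K (.enc m k) = .box :=
  if_neg hk

theorem Msg.toE_ne_box (m : Msg Pl Key) : m.toE ≠ .box := by
  cases m <;> exact nofun

theorem Msg.eq_of_toE_eq_floorK {m m' : Msg Pl Key} (h : m'.toE = floorK inv K m) : m' = m := by
  induction m generalizing m' with
  | plain p => cases m' <;> simp_all [Msg.toE, floorK]
  | key k => cases m' <;> simp_all [Msg.toE, floorK]
  | pair m₁ m₂ ih₁ ih₂ =>
    cases m' <;> simp only [Msg.toE, floorK, EMsg.pair.injEq, reduceCtorEq] at h
    rw [ih₁ h.1, ih₂ h.2]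
  | enc m k ih =>
    by_cases hk : inv k ∈ K
    · rw [floorK_enc_of_mem hk] at h
      cases m' <;> simp only [Msg.toE, EMsg.enc.injEq, reduceCtorEq] at h
      rw [ih h.1, h.2]
    · exact absurd (h.trans (floorK_enc_of_notMem hk m)) m'.toE_ne_box

theorem sub_floor_derivable_general {H : Set (Msg Pl Key)} {m m' : Msg Pl Key}
    (hK : ∀ k ∈ K, DY inv H (.key k)) (hm : DY inv H m)
    (hsub : IsSubmsg m'.toE (floorK inv K m)) : DY inv H m' := by
  have derivable_of_eq {n : Msg Pl Key} (hn : DY inv H n) (h : m'.toE = floorK inv K n) :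
      DY inv H m' :=
    Msg.eq_of_toE_eq_floorK h ▸ hn
  induction m with
  | plain p => exact derivable_of_eq hm (IsSubmsg.plain_iff.mp hsub)
  | key k => exact derivable_of_eq hm (IsSubmsg.key_iff.mp hsub)
  | pair m₁ m₂ ih₁ ih₂ =>
    obtain heq | hsub₁ | hsub₂ := IsSubmsg.pair_iff.mp hsub
    · exact derivable_of_eq hm heq
    · exact ih₁ hm.fst hsub₁
    · exact ih₂ hm.snd hsub₂
  | enc m k ih =>
    by_cases hk : inv k ∈ K
    · rw [floorK_enc_of_mem hk] at hsub
      obtain heq | hsub := IsSubmsg.enc_iff.mp hsub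
      · exact derivable_of_eq hm (heq.trans (floorK_enc_of_mem hk m).symm)
      · exact ih (hm.dec (hK _ hk)) hsub
    · rw [floorK_enc_of_notMem hk] at hsub
      exact absurd (IsSubmsg.box_iff.mp hsub) m'.toE_ne_box

end Floor

/-- Every ▢-free (hence ordinary) submessage `m'` of `⌊m⌋_K` satisfies
`K ∪ {m} ⊢ m'` (keys in `K` being regarded as messages). -/
theorem sub_floor_derivable {Pl Key : Type}
    (inv : Key → Key) (hinv : Function.Involutive inv)
    (K : Set Key) (m m' : Msg Pl Key)
    (hsub : IsSubmsg m'.toE (floorK inv K m)) :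
    DY inv (Msg.key '' K ∪ {m}) m' := by
  exact sub_floor_derivable_general (fun k hk => .mem (.inl ⟨k, hk, rfl⟩)) (.mem (.inr rfl)) hsub
end
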